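/- Consider an n-player game where each player i has action set X_i, a convex compact subset of R^d, and cost function f_i(x_i, x_{−i}) that is convex and lower semicontinuous in x_i for each fixed x_{−i}, and such that the family {f_i(x_i, ·) : x_i ∈ X_i} is uniformly equicontinuous in x_{−i}. Then the game admits a pure Nash equilibrium: a profile x* with f_i(x*_i, x*_{−i}) ≤ f_i(x_i, x*_{−i}) for all x_i ∈ X_i and all i. -/

import Mathlib

section Scarf
open Finset

/-- Dominant sets. -/
def ScarfDom {U I : Type*} (R : I → U → ℕ) (S : Finset U) : Prop :=
  ∀ y, ∃ i, ∀ x ∈ S, R i y ≤ R i x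

theorem scarf_door {U I : Type*} [Fintype U] [DecidableEq U] [Fintype I] [DecidableEq I]
    (R : I → U → ℕ) (hR : ∀ i, Function.Injective (R i)) (τ : Finset U) (hne : τ.Nonempty)
    (hcard : τ.card + 1 = Fintype.card I)
    (hM : ∀ j, ∃ y, ∀ i, i ≠ j → ∃ t ∈ τ, R i t < R i y)
    (x₀ : U) (hx₀ : ScarfDom R (insert x₀ τ)) :
    ∃ xa xb, xa ≠ xb ∧ ∀ x, (x ∉ τ ∧ ScarfDom R (insert x τ)) ↔ (x = xa ∨ x = xb) := by
  have hD : ∀ y, ∃ i, ∀ x ∈ τ, R i y ≤ R i x := fun y => by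
    obtain ⟨i, hi⟩ := hx₀ y
    exact ⟨i, fun x hx => hi x (mem_insert_of_mem hx)⟩
  have hmin : ∀ i, ∃ t ∈ τ, ∀ x ∈ τ, R i t ≤ R i x := fun i => exists_min_image τ (R i) hne
  choose m hmτ hm using hmin
  have hmu : ∀ i, ∀ t ∈ τ, (∀ x ∈ τ, R i t ≤ R i x) → m i = t := fun i t ht h =>
    hR i (le_antisymm (hm i t ht) (h _ (hmτ i)))
  have hsurj : ∀ t ∈ τ, ∃ i, m i = t := fun t ht => by
    obtain ⟨i, hi⟩ := hD t
    exact ⟨i, hmu i t ht hi⟩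
  have himg : univ.image m = τ := by
    ext t; constructor
    · intro h; obtain ⟨i, -, rfl⟩ := mem_image.1 h; exact hmτ i
    · intro h; obtain ⟨i, rfl⟩ := hsurj t h; exact mem_image_of_mem _ (mem_univ _)
  obtain ⟨a, -, b, -, hab, hmab⟩ : ∃ a ∈ (univ : Finset I), ∃ b ∈ (univ : Finset I),
      a ≠ b ∧ m a = m b := by
    apply exists_ne_map_eq_of_card_lt_of_maps_to (t := τ)
    · rw [card_univ]; omega
    · intro i _; exact hmτ i
  have himg2 : (univ.erase a).image m = τ := by
    rw [← himg]; ext t; simp only [mem_image, mem_erase, mem_univ, true_and, and_true]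
    constructor
    · rintro ⟨i, -, h⟩; exact ⟨i, h⟩
    · rintro ⟨i, h⟩
      by_cases hi : i = a
      · subst hi; exact ⟨b, hab.symm, hmab ▸ h⟩
      · exact ⟨i, hi, h⟩
  have hinj : Set.InjOn m (univ.erase a : Finset I) := by
    apply Finset.injOn_of_card_image_eq
    rw [himg2, card_erase_of_mem (mem_univ _), card_univ]; omega
  have hpair : ∀ i j, i ≠ j → m i = m j → (i = a ∧ j = b) ∨ (i = b ∧ j = a) := by
    intro i j hij h
    by_cases hi : i = a
    · left; refine ⟨hi, ?_⟩
      apply hinj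
      · simp; rintro rfl; exact hij hi
      · simp; exact hab.symm
      · rw [← h, hi, hmab]
    · by_cases hj : j = a
      · right; refine ⟨?_, hj⟩
        apply hinj
        · simp [hi]
        · simp; exact hab.symm
        · rw [h, hj, hmab]
      · exact absurd (hinj (by simp [hi]) (by simp [hj]) h) hij
  -- maximal elements
  have hX : ∀ j, ∃ x, (∀ i, i ≠ j → R i (m i) < R i x) ∧
      ∀ y, (∀ i, i ≠ j → R i (m i) < R i y) → R j y ≤ R j x := by
    intro j
    obtain ⟨y, hy⟩ := hM j
    have hne' : (univ.filter fun y => ∀ i, i ≠ j → R i (m i) < R i y).Nonempty := by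
      refine ⟨y, ?_⟩
      simp only [mem_filter, mem_univ, true_and]
      intro i hi
      obtain ⟨t, ht, h⟩ := hy i hi
      exact lt_of_le_of_lt (hm i t ht) h
    obtain ⟨x, hx, hmax⟩ := exists_max_image _ (R j) hne'
    simp only [mem_filter, mem_univ, true_and] at hx hmax
    exact ⟨x, hx, hmax⟩
  choose X hX1 hX2 using hX
  have hback : ∀ j k, j ≠ k → m j = m k → X j ∉ τ ∧ ScarfDom R (insert (X j) τ) := by
    intro j k hjk hmjk
    constructor
    · intro h
      obtain ⟨i, hi⟩ := hsurj _ h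
      by_cases hij : i = j
      · have := hX1 j k hjk.symm
        rw [← hi, hij, hmjk] at this
        exact lt_irrefl _ this
      · have := hX1 j i hij
        rw [← hi] at this
        exact lt_irrefl _ this
    · intro y
      by_cases hy : ∀ i, i ≠ j → R i (m i) < R i y
      · obtain ⟨i, hi⟩ := hD y
        have hij : i = j := by
          by_contra hij
          exact absurd (hi _ (hmτ i)) (not_le.2 (hy i hij))
        subst hij
        refine ⟨i, fun x hx => ?_⟩
        rcases mem_insert.1 hx with rfl | hx
        · exact hX2 i y hy
        · exact hi x hx
      · push Not at hy
        obtain ⟨i, hij, hi⟩ := hy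
        refine ⟨i, fun x hx => ?_⟩
        rcases mem_insert.1 hx with rfl | hx
        · exact hi.trans (hX1 j i hij).le
        · exact hi.trans (hm i x hx)
  refine ⟨X a, X b, ?_, fun x => ⟨?_, ?_⟩⟩
  · intro h
    obtain ⟨i, hi⟩ := hD (X a)
    have h1 := hi _ (hmτ i)
    by_cases hia : i = a
    · have := hX1 b i (by rw [hia]; exact hab)
      rw [← h] at this; omega
    · have := hX1 a i hia
      omega
  · rintro ⟨hxτ, hdom⟩
    obtain ⟨j, hj⟩ := hdom x
    have hlt : R j x < R j (m j) :=
      lt_of_le_of_ne (hj _ (mem_insert_of_mem (hmτ j)))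
        (fun h => hxτ (by rw [hR j h]; exact hmτ j))
    have hkey : ∀ i, ∃ k, k ≠ j ∧ m k = m i ∧ R k (m i) < R k x := by
      intro i
      obtain ⟨k, hk⟩ := hdom (m i)
      have hmk : m k = m i := hmu k _ (hmτ i) fun x hx => hk x (mem_insert_of_mem hx)
      have hle := hk x (mem_insert_self _ _)
      refine ⟨k, ?_, hmk, lt_of_le_of_ne hle ?_⟩
      · rintro rfl; rw [← hmk] at hle; omega
      · intro h; exact hxτ (by rw [← hR k h]; exact hmτ i)
    have hjab : j = a ∨ j = b := by
      obtain ⟨k, hkj, hk, -⟩ := hkey j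
      rcases hpair k j hkj hk with h | h
      · exact Or.inr h.2
      · exact Or.inl h.2
    have hxM : ∀ i, i ≠ j → R i (m i) < R i x := by
      intro i hij
      obtain ⟨k, hkj, hk, hlt⟩ := hkey i
      by_cases hki : k = i
      · subst hki; exact hlt
      · exfalso
        rcases hpair k i hki hk with h | h <;> rcases hjab with h' | h' <;> simp_all
    have hxj : x = X j := by
      apply hR j
      apply le_antisymm (hX2 j x hxM)
      obtain ⟨k, hk⟩ := hdom (X j)
      by_cases hkj : k = j
      · subst hkj; exact hk x (mem_insert_self _ _)
      · exact absurd (hk _ (mem_insert_of_mem (hmτ k))) (not_le.2 (hX1 j k hkj))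
    rcases hjab with rfl | rfl
    · exact Or.inl hxj
    · exact Or.inr hxj
  · rintro (rfl | rfl)
    · exact hback a b hab hmab
    · exact hback b a hab.symm hmab.symm

theorem scarf_room {U I : Type*} [DecidableEq U] [Fintype I] [DecidableEq I]
    (c : U → I) (i₀ : I) (S : Finset U) (hS : S.card = Fintype.card I)
    (hc : S.image c ≠ univ) (x : U) (hx : x ∈ S)
    (hxc : (S.erase x).image c = univ.erase i₀) :
    ∃ x', x' ≠ x ∧ ∀ y, (y ∈ S ∧ (S.erase y).image c = univ.erase i₀) ↔ (y = x ∨ y = x') := by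
  have hinj : Set.InjOn c (S.erase x : Finset U) := by
    apply Finset.injOn_of_card_image_eq
    rw [hxc, card_erase_of_mem (mem_univ _), card_erase_of_mem hx, card_univ, hS]
  have hcx : c x ≠ i₀ := by
    intro h
    apply hc
    rw [← insert_erase hx, image_insert, hxc, h, insert_erase (mem_univ _)]
  have : c x ∈ (S.erase x).image c := by rw [hxc]; simp [hcx]
  obtain ⟨x', hx', hcx'⟩ := mem_image.1 this
  have hx'1 := (mem_erase.1 hx').1
  have hx'2 := (mem_erase.1 hx').2
  refine ⟨x', hx'1, fun y => ⟨?_, ?_⟩⟩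
  · rintro ⟨hyS, hy⟩
    by_contra hne
    push Not at hne
    have hy1 : c y ∈ univ.erase i₀ := by
      rw [← hxc]; exact mem_image_of_mem _ (mem_erase.2 ⟨hne.1, hyS⟩)
    rw [← hy] at hy1
    obtain ⟨z, hz, hzy⟩ := mem_image.1 hy1
    obtain ⟨hz1, hz2⟩ := mem_erase.1 hz
    by_cases hzx : z = x
    · subst hzx
      exact hne.2 (hinj (by simp [hne.1, hyS]) (mem_coe.2 hx') (by rw [hcx', hzy]))
    · exact hz1 (hinj (by simp [hzx, hz2]) (by simp [hne.1, hyS]) hzy)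
  · rintro (rfl | rfl)
    · exact ⟨hx, hxc⟩
    · refine ⟨hx'2, ?_⟩
      rw [← hxc]
      ext i
      simp only [mem_image, mem_erase]
      constructor
      · rintro ⟨z, ⟨h1, h2⟩, rfl⟩
        by_cases hzx : z = x
        · subst hzx; exact ⟨y, ⟨hx'1, hx'2⟩, hcx'⟩
        · exact ⟨z, ⟨hzx, h2⟩, rfl⟩
      · rintro ⟨z, ⟨h1, h2⟩, rfl⟩
        by_cases hzx : z = y
        · subst hzx; exact ⟨x, ⟨h1.symm, hx⟩, hcx'.symm⟩
        · exact ⟨z, ⟨hzx, h2⟩, rfl⟩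

/-- Abstract parity argument. -/
theorem scarf_parity {U I : Type*} [Fintype U] [DecidableEq U] [Fintype I] [DecidableEq I]
    (R : I → U → ℕ) (c : U → I) (i₀ : I) (τ₀ : Finset U)
    (h0c : τ₀.card + 1 = Fintype.card I) (h0i : τ₀.image c = univ.erase i₀)
    (h0 : ∃! x, x ∉ τ₀ ∧ ScarfDom R (insert x τ₀))
    (hdoor : ∀ τ : Finset U, τ ≠ τ₀ → τ.card + 1 = Fintype.card I → τ.image c = univ.erase i₀ →
      ∀ x₀, ScarfDom R (insert x₀ τ) →
      ∃ xa xb, xa ≠ xb ∧ ∀ x, (x ∉ τ ∧ ScarfDom R (insert x τ)) ↔ (x = xa ∨ x = xb)) :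
    ∃ S : Finset U, S.card = Fintype.card I ∧ S.image c = univ ∧ ScarfDom R S := by
  classical
  by_contra hcon
  push Not at hcon
  let D : Finset (Finset U) :=
    univ.filter fun τ => τ.card + 1 = Fintype.card I ∧ τ.image c = univ.erase i₀
  let A : Finset U → Finset U := fun τ => univ.filter fun x => x ∉ τ ∧ ScarfDom R (insert x τ)
  let Rm : Finset (Finset U) := univ.filter fun S => S.card = Fintype.card I ∧ ScarfDom R S
  let B : Finset U → Finset U := fun S =>
    univ.filter fun x => x ∈ S ∧ (S.erase x).image c = univ.erase i₀
  have hsum : ∑ τ ∈ D, (A τ).card = ∑ S ∈ Rm, (B S).card := by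
    rw [← card_sigma, ← card_sigma]
    refine card_bij' (fun p _ => ⟨insert p.2 p.1, p.2⟩) (fun p _ => ⟨p.1.erase p.2, p.2⟩) ?_ ?_ ?_ ?_
    · rintro ⟨τ, x⟩ h
      simp only [D, A, Rm, B, mem_sigma, mem_filter, mem_univ, true_and] at h ⊢
      obtain ⟨⟨h1, h2⟩, h3, h4⟩ := h
      refine ⟨⟨by rw [card_insert_of_notMem h3, h1], h4⟩, mem_insert_self _ _, ?_⟩
      rw [erase_insert h3, h2]
    · rintro ⟨S, x⟩ h
      simp only [D, A, Rm, B, mem_sigma, mem_filter, mem_univ, true_and] at h ⊢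
      obtain ⟨⟨h1, h2⟩, h3, h4⟩ := h
      refine ⟨⟨by rw [card_erase_add_one h3, h1], h4⟩, notMem_erase _ _, ?_⟩
      rwa [insert_erase h3]
    · rintro ⟨τ, x⟩ h
      simp only [D, A, mem_sigma, mem_filter, mem_univ, true_and] at h
      simp [erase_insert h.2.1]
    · rintro ⟨S, x⟩ h
      simp only [Rm, B, mem_sigma, mem_filter, mem_univ, true_and] at h
      simp [insert_erase h.2.1]
  have hB : Even (∑ S ∈ Rm, (B S).card) := by
    apply even_sum
    intro S hS
    simp only [Rm, mem_filter, mem_univ, true_and] at hS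
    rcases (B S).eq_empty_or_nonempty with h | ⟨x, hx⟩
    · simp [h]
    · simp only [B, mem_filter, mem_univ, true_and] at hx
      obtain ⟨x', hne, h⟩ := scarf_room c i₀ S hS.1 (fun h => hcon S hS.1 h hS.2) x hx.1 hx.2
      have : B S = {x, x'} := by ext y; simp [B, h y]
      rw [this, card_pair hne.symm]; exact even_two
  have hA : ¬ Even (∑ τ ∈ D, (A τ).card) := by
    have hmem : τ₀ ∈ D := by simp [D, h0c, h0i]
    rw [← add_sum_erase _ _ hmem]
    obtain ⟨x, hx, hu⟩ := h0
    have h1 : A τ₀ = {x} := by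
      ext y; simp only [A, mem_filter, mem_univ, true_and, mem_singleton]
      exact ⟨hu y, fun h => h ▸ hx⟩
    have h2 : Even (∑ τ ∈ D.erase τ₀, (A τ).card) := by
      apply even_sum
      intro τ hτ
      simp only [D, mem_erase, mem_filter, mem_univ, true_and] at hτ
      rcases (A τ).eq_empty_or_nonempty with h | ⟨x, hx⟩
      · simp [h]
      · simp only [A, mem_filter, mem_univ, true_and] at hx
        obtain ⟨xa, xb, hne, h⟩ := hdoor τ hτ.1 hτ.2.1 hτ.2.2 x hx.2
        have : A τ = {xa, xb} := by ext y; simp [A, h y]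
        rw [this, card_pair hne]; exact even_two
    rw [h1, card_singleton, add_comm]
    exact Nat.not_even_iff_odd.2 h2.add_one
  exact hA (hsum ▸ hB)

theorem scarf_inj {T I : Type*} [Fintype T] [Nonempty T] [Fintype I] [Nonempty I]
    [DecidableEq T] [DecidableEq I]
    (r : I → T → ℕ) (hr : ∀ i, Function.Injective (r i)) (c : T → I) :
    ∃ σ : Finset T, ∀ y, ∃ i ∈ σ.image c, ∀ x ∈ σ, r i y ≤ r i x := by
  obtain ⟨i₀⟩ := ‹Nonempty I›
  obtain ⟨K, hK⟩ : ∃ K, ∀ i t, r i t < K := by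
    refine ⟨(univ.sup fun i => univ.sup fun t => r i t) + 1, fun i t => Nat.lt_succ_of_le ?_⟩
    exact (le_sup (f := fun t => r i t) (mem_univ t)).trans
      (le_sup (f := fun i => univ.sup fun t => r i t) (mem_univ i))
  let e := Fintype.equivFin I
  let R : I → T ⊕ I → ℕ := fun i u =>
    Sum.elim (fun t => r i t + 1) (fun j => if j = i then 0 else K + 1 + e j) u
  have Rl : ∀ i t, R i (Sum.inl t) = r i t + 1 := fun i t => rfl
  have Rs : ∀ i, R i (Sum.inr i) = 0 := fun i => by simp [R]
  have Rd : ∀ i j, j ≠ i → R i (Sum.inr j) = K + 1 + e j := fun i j h => by simp [R, h]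
  have hR : ∀ i, Function.Injective (R i) := by
    intro i u v h
    rcases u with t | j <;> rcases v with s | k
    · rw [Rl, Rl] at h; rw [hr i (by omega : r i t = r i s)]
    · have := hK i t
      by_cases hk : k = i
      · subst hk; rw [Rl, Rs] at h; omega
      · rw [Rl, Rd _ _ hk] at h; omega
    · have := hK i s
      by_cases hk : j = i
      · subst hk; rw [Rl, Rs] at h; omega
      · rw [Rl, Rd _ _ hk] at h; omega
    · by_cases hk : k = i <;> by_cases hj : j = i
      · rw [hk, hj]
      · rw [hk, Rs, Rd _ _ hj] at h; omega
      · rw [hj, Rs, Rd _ _ hk] at h; omega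
      · rw [Rd _ _ hj, Rd _ _ hk] at h
        have : e j = e k := Fin.ext (by omega)
        rw [e.injective this]
  let c' : T ⊕ I → I := Sum.elim c id
  let τ₀ : Finset (T ⊕ I) := (univ.erase i₀).image Sum.inr
  have h0c : τ₀.card + 1 = Fintype.card I := by
    rw [card_image_of_injective _ Sum.inr_injective, card_erase_add_one (mem_univ _), card_univ]
  have h0i : τ₀.image c' = univ.erase i₀ := by
    simp only [τ₀, image_image]
    ext i; simp [c']
  have hinr : ∀ i t, ¬ R i (Sum.inl t) ≤ R i (Sum.inr i) := fun i t => by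
    rw [Rl, Rs]; omega
  have h0 : ∃! x, x ∉ τ₀ ∧ ScarfDom R (insert x τ₀) := by
    obtain ⟨t, -, ht⟩ := exists_max_image (univ : Finset T) (r i₀) univ_nonempty
    refine ⟨Sum.inl t, ⟨by simp [τ₀], ?_⟩, ?_⟩
    · rintro (s | j)
      · refine ⟨i₀, fun x hx => ?_⟩
        rcases mem_insert.1 hx with rfl | hx
        · rw [Rl, Rl]; have := ht s (mem_univ _); omega
        · simp only [τ₀, mem_image, mem_erase, mem_univ, and_true] at hx
          obtain ⟨k, hk, rfl⟩ := hx
          rw [Rl, Rd _ _ hk]; have := hK i₀ s; omega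
      · exact ⟨j, fun x _ => by rw [Rs]; omega⟩
    · rintro x ⟨hx, hdom⟩
      have hforce : ∀ s i, (∀ x' ∈ insert x τ₀, R i (Sum.inl s) ≤ R i x') → i = i₀ := by
        intro s i hi
        by_contra hne
        exact hinr i s (hi _ (mem_insert_of_mem (by simp [τ₀, hne])))
      rcases x with s | j
      · obtain ⟨i, hi⟩ := hdom (Sum.inl t)
        obtain rfl := hforce t i hi
        have h1 := hi _ (mem_insert_self _ _)
        rw [Rl, Rl] at h1
        have h2 := ht s (mem_univ _)
        rw [hr i (by omega : r i s = r i t)]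
      · have hj : j = i₀ := by
          by_contra hne; exact hx (by simp [τ₀, hne])
        subst hj
        obtain ⟨i, hi⟩ := hdom (Sum.inl t)
        obtain rfl := hforce t i hi
        exact absurd (hi _ (mem_insert_self _ _)) (hinr i t)
  obtain ⟨S, hS1, hS2, hS3⟩ := scarf_parity R c' i₀ τ₀ h0c h0i h0 (by
    intro τ hτ hcard himg x₀ hdom
    have hex : ∃ t, Sum.inl t ∈ τ := by
      by_contra hno
      push Not at hno
      apply hτ
      symm
      have hsub : τ₀ ⊆ τ := by
        intro u hu
        simp only [τ₀, mem_image, mem_erase, mem_univ, and_true] at hu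
        obtain ⟨k, hk, rfl⟩ := hu
        have : k ∈ τ.image c' := by rw [himg]; simp [hk]
        obtain ⟨v, hv, hvk⟩ := mem_image.1 this
        rcases v with t | j
        · exact absurd hv (hno t)
        · have : j = k := hvk
          exact this ▸ hv
      exact eq_of_subset_of_card_le hsub (by omega)
    obtain ⟨t, ht⟩ := hex
    refine scarf_door R hR τ ⟨_, ht⟩ hcard (fun j => ⟨Sum.inr j, fun i hij => ⟨_, ht, ?_⟩⟩) x₀ hdom
    rw [Rl, Rd _ _ hij.symm]; have := hK i t; omega)
  have hinj : Set.InjOn c' S := by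
    apply Finset.injOn_of_card_image_eq
    rw [hS2, card_univ, hS1]
  refine ⟨univ.filter fun t => Sum.inl t ∈ S, fun y => ?_⟩
  obtain ⟨i, hi⟩ := hS3 (Sum.inl y)
  refine ⟨i, ?_, fun x hx => ?_⟩
  · have : i ∈ S.image c' := by rw [hS2]; exact mem_univ _
    obtain ⟨v, hv, hvi⟩ := mem_image.1 this
    rcases v with t | j
    · exact mem_image.2 ⟨t, by simpa using hv, hvi⟩
    · have : j = i := hvi
      subst this
      exact absurd (hi _ hv) (hinr j y)
  · have := hi (Sum.inl x) (by simpa using hx)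
    rw [Rl, Rl] at this; omega

theorem scarf {T I : Type*} [Fintype T] [Nonempty T] [Fintype I] [Nonempty I]
    [DecidableEq T] [DecidableEq I] (r : I → T → ℕ) (c : T → I) :
    ∃ σ : Finset T, ∀ y, ∃ i ∈ σ.image c, ∀ x ∈ σ, r i y ≤ r i x := by
  let e := Fintype.equivFin T
  let K := Fintype.card T
  have key : ∀ i x y, r i x * K + e x ≤ r i y * K + e y → r i x ≤ r i y := by
    intro i x y h
    by_contra hlt
    push Not at hlt
    have h1 : (r i y + 1) * K ≤ r i x * K := Nat.mul_le_mul_right _ hlt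
    have h2 : (e y : ℕ) < K := (e y).2
    rw [add_mul] at h1
    omega
  obtain ⟨σ, hσ⟩ := scarf_inj (fun i t => r i t * K + e t) (by
    intro i x y h
    have h' : r i x * K + e x = r i y * K + e y := h
    have h1 := key i x y h'.le
    have h2 := key i y x h'.ge
    have h3 : r i x = r i y := le_antisymm h1 h2
    rw [h3] at h'
    exact e.injective (Fin.ext (by omega))) c
  refine ⟨σ, fun y => ?_⟩
  obtain ⟨i, hi, h⟩ := hσ y
  exact ⟨i, hi, fun x hx => key i y x (h x hx)⟩

end Scarf

section KKM
open Finset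

theorem kkm_simplex {I : Type*} [Fintype I] [Nonempty I] (U : I → Set (I → ℝ))
    (hU : ∀ i, IsOpen (U i)) (hcov : stdSimplex ℝ I ⊆ ⋃ i, U i) :
    ∃ z ∈ stdSimplex ℝ I, ∀ i, z i ≠ 0 → z ∈ U i := by
  classical
  obtain ⟨δ, hδ, hleb⟩ := lebesgue_number_lemma_of_metric (isCompact_stdSimplex ℝ I) hU hcov
  let n := Fintype.card I
  obtain ⟨N, hN⟩ := exists_nat_gt ((n : ℝ) / δ)
  have hnpos : 0 < n := Fintype.card_pos
  have hN0 : (0 : ℝ) < N := lt_of_le_of_lt (by positivity) hN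
  have hNδ : (n : ℝ) / N < δ := by
    rw [div_lt_iff₀ hN0]; rw [div_lt_iff₀ hδ] at hN; linarith
  let T := {k : I → Fin (N + 1) // ∑ i, (k i : ℕ) = N}
  let p : (I → ℕ) → (I → ℝ) := fun k i => (k i : ℝ) / N
  have hp : ∀ k : I → ℕ, ∑ i, k i = N → p k ∈ stdSimplex ℝ I := by
    intro k hk
    refine ⟨fun i => by positivity, ?_⟩
    simp only [p]
    rw [← sum_div, ← Nat.cast_sum, hk, div_self hN0.ne']
  have hmk : ∀ k : I → ℕ, ∑ i, k i = N → ∃ t : T, ∀ i, (t.1 i : ℕ) = k i := by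
    intro k hk
    have hle : ∀ i, k i < N + 1 := fun i => by
      have := single_le_sum (f := k) (fun i _ => Nat.zero_le _) (mem_univ i)
      omega
    exact ⟨⟨fun i => ⟨k i, hle i⟩, by simpa using hk⟩, fun i => rfl⟩
  have hsingle : ∀ (i₁ : I) (w : I → ℕ), ∑ i, w i ≤ N →
      ∑ i, (w i + if i = i₁ then N - ∑ i, w i else 0) = N := by
    intro i₁ w hw
    rw [sum_add_distrib]; simp; omega
  obtain ⟨j₀⟩ := ‹Nonempty I›
  have : Nonempty I := ⟨j₀⟩
  have : Nonempty T := by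
    obtain ⟨t, -⟩ := hmk _ (hsingle j₀ (fun _ => 0) (by simp))
    exact ⟨t⟩
  have hcol : ∀ t : T, ∃ i, Metric.ball (p fun i => (t.1 i : ℕ)) δ ⊆ U i := fun t =>
    hleb _ (hp _ t.2)
  choose c hc using hcol
  obtain ⟨σ, hσ⟩ := scarf (fun i (t : T) => (t.1 i : ℕ)) c
  set C := σ.image c with hC
  have hσne : σ.Nonempty := by
    obtain ⟨i, hi, -⟩ := hσ (Classical.arbitrary T)
    obtain ⟨t, ht, -⟩ := mem_image.1 hi
    exact ⟨t, ht⟩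
  obtain ⟨t₁, ht₁⟩ := hσne
  have hi₁ : c t₁ ∈ C := mem_image_of_mem _ ht₁
  have hmin : ∀ i, ∃ t ∈ σ, ∀ x ∈ σ, (t.1 i : ℕ) ≤ x.1 i := fun i =>
    exists_min_image σ (fun t => (t.1 i : ℕ)) ⟨t₁, ht₁⟩
  choose μ hμσ hμ using hmin
  let m : I → ℕ := fun i => if i ∈ C then ((μ i).1 i : ℕ) else 0
  have hmle : ∀ x ∈ σ, ∀ i, m i ≤ x.1 i := by
    intro x hx i
    by_cases h : i ∈ C
    · simp only [m, h, if_true]; exact hμ i x hx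
    · simp [m, h]
  have hmN : ∑ i, m i ≤ N := by
    calc ∑ i, m i ≤ ∑ i, (t₁.1 i : ℕ) := sum_le_sum fun i _ => hmle t₁ ht₁ i
      _ = N := t₁.2
  have hbig : N < ∑ i, m i + n := by
    by_contra hle
    push Not at hle
    have hs : ∑ i, (m i + 1) ≤ N := by
      rw [sum_add_distrib]; simpa using hle
    obtain ⟨t, ht⟩ := hmk _ (hsingle j₀ (fun i => m i + 1) hs)
    obtain ⟨i, hi, h⟩ := hσ t
    have h1 := h _ (hμσ i)
    rw [ht i] at h1
    simp only [m, hi, if_true] at h1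
    omega
  let w : I → ℕ := fun i => m i + if i = c t₁ then N - ∑ i, m i else 0
  have hw : ∑ i, w i = N := hsingle _ m hmN
  have hclose : ∀ x ∈ σ, dist (p w) (p fun i => (x.1 i : ℕ)) < δ := by
    intro x hx
    refine lt_of_le_of_lt ((dist_pi_le_iff (by positivity)).2 fun i => ?_) hNδ
    have h1 : w i < m i + n := by
      simp only [w]; split_ifs <;> omega
    have h2 : m i ≤ w i := by simp [w]
    have h3 : (x.1 i : ℕ) ≤ m i + n := by
      have ha : ∑ j ∈ univ.erase i, m j ≤ ∑ j ∈ univ.erase i, (x.1 j : ℕ) :=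
        sum_le_sum fun j _ => hmle x hx j
      have hb := add_sum_erase univ m (mem_univ i)
      have hd := add_sum_erase univ (fun j => (x.1 j : ℕ)) (mem_univ i)
      have he := x.2
      omega
    have h4 := hmle x hx i
    have h1' : (w i : ℝ) ≤ m i + n := by exact_mod_cast h1.le
    have h2' : (m i : ℝ) ≤ w i := by exact_mod_cast h2
    have h3' : ((x.1 i : ℕ) : ℝ) ≤ m i + n := by exact_mod_cast h3
    have h4' : (m i : ℝ) ≤ ((x.1 i : ℕ) : ℝ) := by exact_mod_cast h4
    simp only [p]
    rw [Real.dist_eq, ← sub_div, abs_div, abs_of_pos hN0]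
    gcongr
    rw [abs_le]; constructor <;> linarith
  refine ⟨p w, hp w hw, fun i hi => ?_⟩
  have hiC : i ∈ C := by
    by_contra hn
    apply hi
    have : i ≠ c t₁ := fun h => hn (h ▸ hi₁)
    simp [p, w, m, hn, this]
  obtain ⟨x, hx, rfl⟩ := mem_image.1 hiC
  exact hc x (hclose x hx)

theorem kyfan {E : Type*} [AddCommGroup E] [Module ℝ E] [TopologicalSpace E]
    [IsTopologicalAddGroup E] [ContinuousSMul ℝ E] (K : Set E) (hK : IsCompact K)
    (hKc : Convex ℝ K) (hKne : K.Nonempty) (Φ : E → E → ℝ)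
    (hlsc : ∀ y ∈ K, LowerSemicontinuousOn (fun x => Φ x y) K)
    (hconc : ∀ x ∈ K, ConcaveOn ℝ K (Φ x)) (hdiag : ∀ x ∈ K, Φ x x ≤ 0) :
    ∃ x ∈ K, ∀ y ∈ K, Φ x y ≤ 0 := by
  classical
  by_contra hcon
  push Not at hcon
  have hO : ∀ y : K, ∃ O : Set E, IsOpen O ∧ K ∩ (fun x => Φ x y) ⁻¹' Set.Ioi 0 = K ∩ O :=
    fun y => lowerSemicontinuousOn_iff_preimage_Ioi.1 (hlsc y y.2) 0
  choose O hOo hO using hO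
  obtain ⟨s, hs⟩ := hK.elim_finite_subcover O hOo (fun x hx => by
    obtain ⟨y, hy, h⟩ := hcon x hx
    have : x ∈ K ∩ O ⟨y, hy⟩ := by rw [← hO]; exact ⟨hx, h⟩
    exact Set.mem_iUnion.2 ⟨_, this.2⟩)
  have : Nonempty s := by
    obtain ⟨x, hx⟩ := hKne
    obtain ⟨y, hy⟩ := Set.mem_iUnion.1 (hs hx)
    obtain ⟨hy, -⟩ := Set.mem_iUnion.1 hy
    exact ⟨⟨y, hy⟩⟩
  let φ : (s → ℝ) → E := fun z => ∑ i, z i • ((i : K) : E)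
  have hφ : Continuous φ := by fun_prop
  have hφK : ∀ z ∈ stdSimplex ℝ s, φ z ∈ K := fun z hz =>
    hKc.sum_mem (fun i _ => hz.1 i) hz.2 (fun i _ => i.1.2)
  obtain ⟨z, hz, h⟩ := kkm_simplex (fun i : s => φ ⁻¹' O i) (fun i => (hOo _).preimage hφ)
    (fun z hz => by
      obtain ⟨y, hy⟩ := Set.mem_iUnion.1 (hs (hφK z hz))
      obtain ⟨hy, h⟩ := Set.mem_iUnion.1 hy
      exact Set.mem_iUnion.2 ⟨⟨y, hy⟩, h⟩)
  have hzK := hφK z hz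
  have hpos : ∀ i : s, z i ≠ 0 → 0 < Φ (φ z) i := fun i hi => by
    have : φ z ∈ K ∩ O i := ⟨hzK, h i hi⟩
    rw [← hO] at this
    exact this.2
  have hJ := (hconc _ hzK).le_map_sum (t := univ) (w := z) (p := fun i : s => ((i : K) : E))
    (fun i _ => hz.1 i) hz.2 (fun i _ => i.1.2)
  have h1 : 0 < ∑ i, z i • Φ (φ z) i := by
    apply sum_pos'
    · intro i _
      by_cases hi : z i = 0
      · simp [hi]
      · exact smul_nonneg (hz.1 i) (hpos i hi).le
    · by_contra hall
      push Not at hall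
      have : ∑ i, z i = 0 := by
        apply sum_eq_zero
        intro i hi
        by_contra hne
        have := smul_pos (lt_of_le_of_ne (hz.1 i) (Ne.symm hne)) (hpos i hne)
        exact absurd (hall i hi) (not_le.2 this)
      rw [hz.2] at this
      exact one_ne_zero this
  have h2 := hdiag _ hzK
  have h3 : ∑ i, z i • Φ (φ z) i ≤ Φ (φ z) (φ z) := hJ
  linarith

end KKM

/-- Existence of a pure Nash equilibrium in an `n`-player game with convex
compact action sets and costs convex and l.s.c. in the own action, uniformly
equicontinuous in the opponents' actions. -/
theorem lsc_convex_game_PNE (n d : ℕ)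
    (X : Fin n → Set (EuclideanSpace ℝ (Fin d)))
    (hXne : ∀ i, (X i).Nonempty) (hXconv : ∀ i, Convex ℝ (X i))
    (hXcomp : ∀ i, IsCompact (X i))
    (f : Fin n → (Fin n → EuclideanSpace ℝ (Fin d)) → ℝ)
    (hconv : ∀ i, ∀ x : Fin n → EuclideanSpace ℝ (Fin d), (∀ j, x j ∈ X j) →
      ConvexOn ℝ (X i) (fun y => f i (Function.update x i y)))
    (hlsc : ∀ i, ∀ x : Fin n → EuclideanSpace ℝ (Fin d), (∀ j, x j ∈ X j) →
      LowerSemicontinuousOn (fun y => f i (Function.update x i y)) (X i))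
    (hequi : ∀ i, ∀ ε > (0 : ℝ), ∃ δ > (0 : ℝ),
      ∀ x x' : Fin n → EuclideanSpace ℝ (Fin d),
        (∀ j, x j ∈ X j) → (∀ j, x' j ∈ X j) → x i = x' i →
        Real.sqrt (∑ j, ‖x j - x' j‖ ^ 2) ≤ δ → |f i x - f i x'| ≤ ε) :
    ∃ x : Fin n → EuclideanSpace ℝ (Fin d), (∀ i, x i ∈ X i) ∧
      ∀ i, ∀ y ∈ X i, f i x ≤ f i (Function.update x i y) := by
  let E := Fin n → EuclideanSpace ℝ (Fin d)
  let K : Set E := Set.univ.pi X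
  have hKmem : ∀ x : E, x ∈ K ↔ ∀ i, x i ∈ X i := fun x =>
    Set.mem_univ_pi
  have hupd : ∀ x ∈ K, ∀ i, ∀ y ∈ X i, Function.update x i y ∈ K := by
    intro x hx i y hy
    rw [hKmem] at hx ⊢
    intro j
    by_cases h : j = i
    · subst h; simpa using hy
    · simpa [h] using hx j
  -- equicontinuity as a neighbourhood statement
  have hnear : ∀ i, ∀ x₀ ∈ K, ∀ ε > (0 : ℝ), ∀ᶠ x in nhdsWithin x₀ K, ∀ y ∈ X i,
      |f i (Function.update x i y) - f i (Function.update x₀ i y)| ≤ ε := by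
    intro i x₀ hx₀ ε hε
    obtain ⟨δ, hδ, h⟩ := hequi i ε hε
    have hcont : Continuous fun x : E => Real.sqrt (∑ j, ‖x j - x₀ j‖ ^ 2) := by fun_prop
    have hev : ∀ᶠ x in nhds x₀, Real.sqrt (∑ j, ‖x j - x₀ j‖ ^ 2) < δ :=
      hcont.continuousAt.eventually_lt continuousAt_const (by simpa using hδ)
    filter_upwards [mem_nhdsWithin_of_mem_nhds hev, self_mem_nhdsWithin] with x hx hxK y hy
    refine h _ _ ((hKmem _).1 (hupd x hxK i y hy)) ((hKmem _).1 (hupd x₀ hx₀ i y hy)) (by simp) ?_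
    refine le_trans (Real.sqrt_le_sqrt (Finset.sum_le_sum fun j _ => ?_)) (le_of_lt hx)
    by_cases hj : j = i
    · subst hj; simp
    · simp [hj]
  have hL1 : ∀ i, LowerSemicontinuousOn (f i) K := by
    intro i x₀ hx₀ a ha
    have hx₀' := (hKmem _).1 hx₀
    set ε := (f i x₀ - a) / 2 with hε
    have hεpos : 0 < ε := by simp only [hε]; linarith
    have h1 := hlsc i x₀ hx₀' (x₀ i) (hx₀' i) (f i x₀ - ε) (by
      simp only [Function.update_eq_self]; linarith)
    have htend : Filter.Tendsto (fun x : E => x i) (nhdsWithin x₀ K) (nhdsWithin (x₀ i) (X i)) := by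
      apply ContinuousWithinAt.tendsto_nhdsWithin
      · exact (continuous_apply i).continuousWithinAt
      · intro x hx; exact (hKmem _).1 hx i
    filter_upwards [htend.eventually h1, hnear i x₀ hx₀ (ε / 2) (by linarith),
      self_mem_nhdsWithin] with x h2 h3 hxK
    have h4 := h3 (x i) ((hKmem _).1 hxK i)
    rw [Function.update_eq_self] at h4
    have h5 := (abs_le.1 h4).1
    have h6 : f i (Function.update x₀ i (x i)) > f i x₀ - ε := h2
    linarith
  have hL2 : ∀ i, ∀ y ∈ X i, LowerSemicontinuousOn (fun x => - f i (Function.update x i y)) K := by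
    intro i y hy x₀ hx₀ a ha
    simp only at ha
    filter_upwards [hnear i x₀ hx₀ ((- f i (Function.update x₀ i y) - a) / 2) (by linarith)]
      with x h
    have := (abs_le.1 (h y hy)).2
    linarith
  obtain ⟨x, hxK, hx⟩ := kyfan K (isCompact_univ_pi hXcomp) (convex_pi fun i _ => hXconv i)
    (Set.univ_pi_nonempty_iff.2 hXne)
    (fun x y => ∑ i, (f i x + - f i (Function.update x i (y i))))
    (fun y hy => by
      refine lowerSemicontinuousOn_sum fun i _ => ?_
      exact (hL1 i).add (hL2 i (y i) ((hKmem _).1 hy i)))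
    (fun x hx => by
      refine ⟨convex_pi fun i _ => hXconv i, fun y hy z hz a b ha hb hab => ?_⟩
      simp only [smul_eq_mul, Finset.mul_sum]
      rw [← Finset.sum_add_distrib]
      refine Finset.sum_le_sum fun i _ => ?_
      have := (hconv i x ((hKmem _).1 hx)).2 ((hKmem _).1 hy i) ((hKmem _).1 hz i) ha hb hab
      simp only [smul_eq_mul] at this
      have e : (a • y + b • z) i = a • y i + b • z i := rfl
      rw [e]
      have hb' : b = 1 - a := by linarith
      subst hb'
      linarith)
    (fun x _ => by simp)
  refine ⟨x, (hKmem _).1 hxK, fun i y hy => ?_⟩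
  have h := hx _ (hupd x hxK i y hy)
  rw [Finset.sum_eq_single i] at h
  · simp only [Function.update_self] at h
    linarith
  · intro j _ hj
    simp [hj]
  · simp
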